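/- arXiv:math/0502222 — 2 statements merged into one kernel-verified Lean document; each statement's English description precedes it below -/
import Mathlib

section
/- Let B be the localization of the Laurent polynomial ring ℚ[u, u⁻¹] at the multiplicative submonoid generated by 1 − u, and let A = B[[q]] be the formal power series ring over B. Define X, Y, a₄, a₆ ∈ A by: X has q⁰-coefficient u/(1−u)² and, for N ≥ 1, q^N-coefficient Σ_{m ∣ N} m·(u^m + u^{−m} − 2); Y has q⁰-coefficient u²/(1−u)³ and, for N ≥ 1, q^N-coefficient Σ_{m ∣ N} ( (m(m−1)/2)·u^m − (m(m+1)/2)·u^{−m} + m ); a₄ has q⁰-coefficient 0 and q^N-coefficient −5·σ₃(N); a₆ has q⁰-coefficient 0 and q^N-coefficient −(5σ₃(N) + 7σ₅(N))/12, where σ_j(N) = Σ_{m ∣ N} m^j. Then Y² + X·Y = X³ + a₄·X + a₆ in A. (This is the statement that the Tate series X(u), Y(u) satisfy the Weierstrass equation y² + xy = x³ + a₄(q)x + a₆(q) of the Tate curve.) -/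
noncomputable section

/-- `B = ℚ[u,u⁻¹][(1-u)⁻¹]`: the localization of the Laurent polynomial ring
`ℚ[u,u⁻¹]` at the powers of `1 - u`. -/
abbrev TateBase : Type :=
  Localization (Submonoid.powers ((1 : LaurentPolynomial ℚ) - LaurentPolynomial.T 1))

/-- The Tate series `X(u) ∈ B[[q]]`: the `q⁰`-coefficient is `u/(1-u)²` and the
`q^N`-coefficient (for `N ≥ 1`) is `Σ_{m ∣ N} m·(u^m + u^{-m} - 2)`. -/
def tateX : PowerSeries TateBase :=
  PowerSeries.mk fun N =>
    if N = 0 then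
      Localization.mk (LaurentPolynomial.T 1)
        ⟨((1 : LaurentPolynomial ℚ) - LaurentPolynomial.T 1) ^ 2, 2, rfl⟩
    else
      algebraMap (LaurentPolynomial ℚ) TateBase
        (∑ m ∈ N.divisors, LaurentPolynomial.C (m : ℚ) *
          (LaurentPolynomial.T (m : ℤ) + LaurentPolynomial.T (-(m : ℤ)) - 2))

/-- The Tate series `Y(u) ∈ B[[q]]`: the `q⁰`-coefficient is `u²/(1-u)³` and the
`q^N`-coefficient (for `N ≥ 1`) is
`Σ_{m ∣ N} ((m(m-1)/2)·u^m - (m(m+1)/2)·u^{-m} + m)`. -/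
def tateY : PowerSeries TateBase :=
  PowerSeries.mk fun N =>
    if N = 0 then
      Localization.mk (LaurentPolynomial.T 2)
        ⟨((1 : LaurentPolynomial ℚ) - LaurentPolynomial.T 1) ^ 3, 3, rfl⟩
    else
      algebraMap (LaurentPolynomial ℚ) TateBase
        (∑ m ∈ N.divisors,
          (LaurentPolynomial.C ((m : ℚ) * ((m : ℚ) - 1) / 2) *
              LaurentPolynomial.T (m : ℤ)
            - LaurentPolynomial.C ((m : ℚ) * ((m : ℚ) + 1) / 2) *
              LaurentPolynomial.T (-(m : ℤ))
            + LaurentPolynomial.C (m : ℚ)))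

/-- The series `a₄(q) = -5·Σ_{n≥1} σ₃(n)qⁿ ∈ B[[q]]`. -/
def tateA4 : PowerSeries TateBase :=
  PowerSeries.mk fun N =>
    if N = 0 then 0
    else
      algebraMap (LaurentPolynomial ℚ) TateBase
        (LaurentPolynomial.C (-5 * ∑ m ∈ N.divisors, (m : ℚ) ^ 3))

/-- The series `a₆(q) = -Σ_{n≥1} ((5σ₃(n) + 7σ₅(n))/12)qⁿ ∈ B[[q]]`. -/
def tateA6 : PowerSeries TateBase :=
  PowerSeries.mk fun N =>
    if N = 0 then 0
    else
      algebraMap (LaurentPolynomial ℚ) TateBase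
        (LaurentPolynomial.C
          (-(5 * (∑ m ∈ N.divisors, (m : ℚ) ^ 3) +
              7 * (∑ m ∈ N.divisors, (m : ℚ) ^ 5)) / 12))

/-!
With `Z = 2 Y + X = u dX/du`, four times the difference of the two sides of the equation is
`D = Z² - X² - 4 (X³ + a₄ X + a₆)`, and `D = 0` by the classical argument for elliptic functions.
In terms of `w = u + u⁻¹ - 2`, which vanishes at `u = 1`, the principal parts at `u = 1` and the
constant terms cancel, so that every `q^N`-coefficient of `D` is `w` times a polynomial in `w`.
In particular `D` is invariant under `u ↦ u⁻¹`. Over `ℚ((u))` one can compare coefficients and find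
that `X` is invariant under `u ↦ u⁻¹ q` and `Z` changes sign, so `D` is also invariant under
`u ↦ u⁻¹ q`. Hence it is invariant under `u ↦ u q`, therefore independent of `u`, and its value at
`u = 1` is zero.
-/

open scoped Polynomial PowerSeries LaurentPolynomial LaurentSeries
open LaurentPolynomial (T)
open Polynomial (aeval derivative)

section LambertSeries

variable {R S : Type*} [CommSemiring R] [CommSemiring S]

/-- The Lambert series `∑_{m ≥ 1} g m · q^m / (1 - q^m)`, that is, the series whose
`q^N`-coefficient is `∑_{m ∣ N} g m`; its constant term is zero because `Nat.divisors 0 = ∅`. -/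
def lambertSeries (g : ℕ → R) : R⟦X⟧ :=
  PowerSeries.mk fun N => ∑ m ∈ N.divisors, g m

theorem coeff_lambertSeries (g : ℕ → R) (N : ℕ) :
    PowerSeries.coeff N (lambertSeries g) = ∑ m ∈ N.divisors, g m :=
  PowerSeries.coeff_mk _ _

theorem map_lambertSeries (f : R →+* S) (g : ℕ → R) :
    PowerSeries.map f (lambertSeries g) = lambertSeries fun m => f (g m) := by
  ext N
  simp [coeff_lambertSeries]

theorem lambertSeries_add (g h : ℕ → R) :
    lambertSeries (fun m => g m + h m) = lambertSeries g + lambertSeries h := by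
  ext N
  simp [coeff_lambertSeries, Finset.sum_add_distrib]

theorem lambertSeries_const_mul (a : R) (g : ℕ → R) :
    lambertSeries (fun m => a * g m) = PowerSeries.C a * lambertSeries g := by
  ext N
  simp [coeff_lambertSeries, Finset.mul_sum]

theorem mk_ite_eq_C_add_map_lambertSeries (f : R →+* S) (a : S) (g : ℕ → R) :
    PowerSeries.mk (fun N => if N = 0 then a else f (∑ m ∈ N.divisors, g m)) =
      PowerSeries.C a + PowerSeries.map f (lambertSeries g) := by
  ext N
  rw [PowerSeries.coeff_mk, map_add, PowerSeries.coeff_C, PowerSeries.coeff_map,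
    coeff_lambertSeries]
  split_ifs with hN
  · simp [hN]
  · rw [zero_add]

end LambertSeries

section ToLaurentSeries

variable {R : Type*} [CommRing R]

/-- The embedding `R[u, u⁻¹] → R((u))`. -/
def toLaurentSeries : R[T;T⁻¹] →+* R⸨X⸩ :=
  LaurentPolynomial.eval₂ HahnSeries.C
    ⟨HahnSeries.single 1 1, HahnSeries.single (-1) 1, by simp, by simp⟩

theorem toLaurentSeries_C (a : R) :
    toLaurentSeries (LaurentPolynomial.C a) = HahnSeries.C a :=
  LaurentPolynomial.eval₂_C _ _ _

theorem toLaurentSeries_T (n : ℤ) :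
    toLaurentSeries (LaurentPolynomial.T n : R[T;T⁻¹]) = HahnSeries.single n 1 := by
  obtain ⟨m, rfl | rfl⟩ := n.eq_nat_or_neg
  · simp [toLaurentSeries, HahnSeries.single_pow]
  · simp [toLaurentSeries, HahnSeries.single_pow]

theorem coeff_toLaurentSeries (p : R[T;T⁻¹]) (k : ℤ) :
    (toLaurentSeries p).coeff k = p.coeff k := by
  induction p using LaurentPolynomial.induction_on' with
  | add p q hp hq => simp [hp, hq]
  | C_mul_T n a =>
    rw [map_mul, toLaurentSeries_C, toLaurentSeries_T, HahnSeries.C_mul_eq_smul,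
      ← LaurentPolynomial.smul_eq_C_mul]
    simp [HahnSeries.coeff_single, eq_comm]

theorem toLaurentSeries_injective : Function.Injective (toLaurentSeries (R := R)) := by
  intro p q h
  ext k
  rw [← coeff_toLaurentSeries, h, coeff_toLaurentSeries]

end ToLaurentSeries

section Reflection

variable {R : Type*} [CommRing R]

/-- The involution of `R[[u]][[v]]` that exchanges `u` and `v`. -/
def swapVars : R⟦X⟧⟦X⟧ →+* R⟦X⟧⟦X⟧ where
  toFun F := PowerSeries.mk fun j => PowerSeries.mk fun i =>
    PowerSeries.coeff j (PowerSeries.coeff i F)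
  map_one' := by
    ext j i
    by_cases hi : i = 0 <;> by_cases hj : j = 0 <;> simp [PowerSeries.coeff_one, hi, hj]
  map_zero' := by ext; simp
  map_add' F G := by ext; simp
  map_mul' F G := by
    ext j i
    simp only [PowerSeries.coeff_mul, map_sum, PowerSeries.coeff_mk]
    rw [Finset.sum_comm]

theorem coeff_coeff_swapVars (F : R⟦X⟧⟦X⟧) (i j : ℕ) :
    PowerSeries.coeff i (PowerSeries.coeff j (swapVars F)) =
      PowerSeries.coeff j (PowerSeries.coeff i F) := by
  simp [swapVars]

/-- The substitution `v = u⁻¹ q`, from `R[[u]][[v]]` to `R((u))[[q]]`. -/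
def substReflection : R⟦X⟧⟦X⟧ →+* R⸨X⸩⟦X⟧ :=
  (PowerSeries.rescale (HahnSeries.single (-1 : ℤ) 1)).comp
    (PowerSeries.map (HahnSeries.ofPowerSeries ℤ R))

theorem coeff_coeff_substReflection (F : R⟦X⟧⟦X⟧) (i j : ℕ) :
    (PowerSeries.coeff j (substReflection F)).coeff (i - j) =
      PowerSeries.coeff i (PowerSeries.coeff j F) := by
  simp [substReflection, PowerSeries.coeff_rescale, HahnSeries.single_pow,
    HahnSeries.coeff_single_mul]

theorem coeff_coeff_substReflection_of_neg (F : R⟦X⟧⟦X⟧) {N : ℕ} {k : ℤ} (hk : k + N < 0) :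
    (PowerSeries.coeff N (substReflection F)).coeff k = 0 := by
  simp [substReflection, PowerSeries.coeff_rescale, HahnSeries.single_pow,
    HahnSeries.coeff_single_mul, PowerSeries.coeff_coe, hk]

theorem exists_substReflection_eq {f : R⸨X⸩⟦X⟧}
    (hf : ∀ (N : ℕ) (k : ℤ), k + N < 0 → (PowerSeries.coeff N f).coeff k = 0) :
    ∃ F, substReflection F = f := by
  refine ⟨PowerSeries.mk fun j => PowerSeries.mk fun i =>
    (PowerSeries.coeff j f).coeff (i - j), ?_⟩
  ext N k
  rcases lt_or_ge (k + N) 0 with hk | hk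
  · rw [coeff_coeff_substReflection_of_neg _ hk, hf N k hk]
  · obtain ⟨i, hi⟩ := Int.eq_ofNat_of_zero_le hk
    obtain rfl : k = i - N := by omega
    simp [coeff_coeff_substReflection]

/-- The series in `R((u))[[q]]` that are invariant under `u ↦ u⁻¹ q`. This substitution is not
defined on all of `R((u))[[q]]`; it is the exchange of `u` and `v` on the image of `R[[u, v]]`
under `v = u⁻¹ q`. -/
def reflectionInvariants (R : Type*) [CommRing R] : Subring R⸨X⸩⟦X⟧ :=
  (swapVars.eqLocus (RingHom.id R⟦X⟧⟦X⟧)).map substReflection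

theorem mem_reflectionInvariants_iff {f : R⸨X⸩⟦X⟧} :
    f ∈ reflectionInvariants R ↔
      (∀ (N : ℕ) (k : ℤ), k + N < 0 → (PowerSeries.coeff N f).coeff k = 0) ∧
      ∀ i j : ℕ, (PowerSeries.coeff j f).coeff (i - j) =
        (PowerSeries.coeff i f).coeff (j - i) := by
  constructor
  · rintro ⟨F, hF, rfl⟩
    have hswap : swapVars F = F := hF
    refine ⟨fun N k => coeff_coeff_substReflection_of_neg F, fun i j => ?_⟩
    rw [coeff_coeff_substReflection, coeff_coeff_substReflection, ← coeff_coeff_swapVars, hswap]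
  · rintro ⟨hneg, hsymm⟩
    obtain ⟨F, rfl⟩ := exists_substReflection_eq hneg
    refine ⟨F, ?_, rfl⟩
    change swapVars F = F
    ext j i
    simpa only [coeff_coeff_swapVars, coeff_coeff_substReflection] using hsymm j i

theorem sq_mem_reflectionInvariants {f : R⸨X⸩⟦X⟧}
    (hneg : ∀ (N : ℕ) (k : ℤ), k + N < 0 → (PowerSeries.coeff N f).coeff k = 0)
    (hanti : ∀ i j : ℕ, (PowerSeries.coeff j f).coeff (i - j) =
      -(PowerSeries.coeff i f).coeff (j - i)) :
    f ^ 2 ∈ reflectionInvariants R := by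
  obtain ⟨F, rfl⟩ := exists_substReflection_eq hneg
  have hswap : swapVars F = -F := by
    ext j i
    simpa only [coeff_coeff_swapVars, coeff_coeff_substReflection, map_neg] using hanti j i
  refine ⟨F ^ 2, ?_, map_pow _ _ _⟩
  change swapVars (F ^ 2) = F ^ 2
  rw [map_pow, hswap, neg_sq]

theorem map_C_mem_reflectionInvariants (g : R⟦X⟧) :
    PowerSeries.map HahnSeries.C g ∈ reflectionInvariants R := by
  refine mem_reflectionInvariants_iff.2 ⟨fun N k hk => ?_, fun i j => ?_⟩
  · have hk' : k ≠ 0 := by omega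
    simp [hk']
  · by_cases hij : i = j
    · rw [hij]
    · have hij' : (i : ℤ) - j ≠ 0 := by omega
      have hji' : (j : ℤ) - i ≠ 0 := by omega
      simp [hij', hji']

-- Invariance under `u ↦ u⁻¹` and `u ↦ u⁻¹ q` gives invariance under `u ↦ u q`, which raises the
-- exponent of `q` in a term containing `u ^ k` by `k`.
theorem coeff_coeff_eq_zero_of_mem_reflectionInvariants {f : R⸨X⸩⟦X⟧}
    (hf : f ∈ reflectionInvariants R)
    (heven : ∀ (N : ℕ) (k : ℤ), (PowerSeries.coeff N f).coeff (-k) =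
      (PowerSeries.coeff N f).coeff k) (N : ℕ) {k : ℤ} (hk : k ≠ 0) :
    (PowerSeries.coeff N f).coeff k = 0 := by
  obtain ⟨hneg, hsymm⟩ := mem_reflectionInvariants_iff.1 hf
  have hpos : ∀ (N k : ℕ), 0 < k → (PowerSeries.coeff N f).coeff k = 0 := by
    intro N
    induction N using Nat.strong_induction_on with
    | _ N ih =>
      intro k hk
      rw [← heven]
      rcases lt_or_ge N k with hlt | hle
      · exact hneg N _ (by omega)
      · have hshift := hsymm (N - k) N
        rw [Nat.cast_sub hle, sub_sub_cancel_left, sub_sub_cancel] at hshift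
        rw [hshift, ih (N - k) (by omega) k hk]
  obtain ⟨n, rfl | rfl⟩ := k.eq_nat_or_neg
  · exact hpos N n (by omega)
  · rw [heven, hpos N n (by omega)]

end Reflection

section CuspParam

variable {R : Type*} [CommRing R]

/-- The function `w = u + u⁻¹ - 2 = (1 - u)² / u`, which is invariant under `u ↦ u⁻¹` and has a
double zero at `u = 1`. -/
def cuspParam : R[T;T⁻¹] :=
  T 1 + T (-1) - 2

theorem T_one_mul_T_neg_one :
    (T 1 * T (-1) : R[T;T⁻¹]) = 1 := by
  rw [← LaurentPolynomial.T_add, add_neg_cancel, LaurentPolynomial.T_zero]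

theorem T_add_two (n : ℤ) :
    (T (n + 2) : R[T;T⁻¹]) = (T 1 + T (-1)) * T (n + 1) - T n := by
  rw [add_mul, ← LaurentPolynomial.T_add, ← LaurentPolynomial.T_add]
  ring_nf

theorem T_neg_add_two (n : ℤ) :
    (T (-(n + 2)) : R[T;T⁻¹]) = (T 1 + T (-1)) * T (-(n + 1)) - T (-n) := by
  rw [add_mul, ← LaurentPolynomial.T_add, ← LaurentPolynomial.T_add]
  ring_nf

theorem T_one_sub_T_neg_one_sq :
    (T 1 - T (-1) : R[T;T⁻¹]) ^ 2 =
      cuspParam ^ 2 + 4 * cuspParam := by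
  rw [cuspParam]
  linear_combination -4 * T_one_mul_T_neg_one (R := R)

theorem invert_aeval_cuspParam (p : R[X]) :
    LaurentPolynomial.invert (aeval (cuspParam : R[T;T⁻¹]) p) =
      aeval cuspParam p := by
  rw [← Polynomial.aeval_algHom_apply, cuspParam, map_sub, map_ofNat]
  simp [add_comm]

theorem aeval_cuspParam_X_mul_eq_zero {p : R[X]}
    (h : ∀ k ≠ 0, (aeval (cuspParam : R[T;T⁻¹]) (Polynomial.X * p)).coeff k = 0) :
    aeval (cuspParam : R[T;T⁻¹]) (Polynomial.X * p) = 0 := by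
  set f := aeval (cuspParam : R[T;T⁻¹]) (Polynomial.X * p) with hf
  have hconst : f = LaurentPolynomial.C (f.coeff 0) := by
    ext k
    by_cases hk : k = 0
    · simp [hk]
    · simp [hk, h k hk]
  have heval : LaurentPolynomial.eval₂ (RingHom.id R) 1 f = 0 := by
    rw [hf, map_mul, map_mul, Polynomial.aeval_X, cuspParam]
    simp only [map_sub, map_add, LaurentPolynomial.eval₂_T, map_ofNat, one_zpow, Units.val_one]
    ring
  rw [hconst, LaurentPolynomial.eval₂_C, RingHom.id_apply] at heval
  rw [hconst, heval, map_zero]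

/-- Evaluation of polynomials at `w = u + u⁻¹ - 2`, with values in `R((u))`. -/
def evalCuspParam : R[X] →+* R⸨X⸩ :=
  toLaurentSeries.comp (aeval cuspParam).toRingHom

theorem evalCuspParam_apply (p : R[X]) :
    evalCuspParam p = toLaurentSeries (aeval cuspParam p) :=
  rfl

theorem evalCuspParam_C (a : R) : evalCuspParam (Polynomial.C a) = HahnSeries.C a := by
  rw [evalCuspParam_apply, Polynomial.aeval_C, ← LaurentPolynomial.C_eq_algebraMap,
    toLaurentSeries_C]

theorem map_evalCuspParam_map_C (g : R⟦X⟧) :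
    PowerSeries.map evalCuspParam (PowerSeries.map Polynomial.C g) =
      PowerSeries.map HahnSeries.C g := by
  ext1 N
  simp only [PowerSeries.coeff_map, evalCuspParam_C]

theorem evalCuspParam_X : evalCuspParam Polynomial.X = toLaurentSeries (cuspParam : R[T;T⁻¹]) := by
  rw [evalCuspParam_apply, Polynomial.aeval_X]

theorem coeff_neg_evalCuspParam (p : R[X]) (k : ℤ) :
    (evalCuspParam p).coeff (-k) = (evalCuspParam p).coeff k := by
  simp only [evalCuspParam_apply, coeff_toLaurentSeries]
  rw [← LaurentPolynomial.invert_apply, invert_aeval_cuspParam]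

theorem map_evalCuspParam_C_X_mul_eq_zero {G : R[X]⟦X⟧}
    (hG : PowerSeries.map evalCuspParam (PowerSeries.C Polynomial.X * G) ∈
      reflectionInvariants R) :
    PowerSeries.map evalCuspParam (PowerSeries.C Polynomial.X * G) = 0 := by
  have hconst := fun N k => coeff_coeff_eq_zero_of_mem_reflectionInvariants hG
    (fun N k => by rw [PowerSeries.coeff_map, coeff_neg_evalCuspParam]) N (k := k)
  ext1 N
  rw [PowerSeries.coeff_map, PowerSeries.coeff_C_mul, evalCuspParam_apply,
    aeval_cuspParam_X_mul_eq_zero, map_zero, map_zero]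
  intro k hk
  rw [← coeff_toLaurentSeries, ← evalCuspParam_apply, ← PowerSeries.coeff_C_mul,
    ← PowerSeries.coeff_map, hconst N k hk]

end CuspParam

section ShiftedChebyshev

variable {R : Type*} [CommRing R]

/-- The polynomial `P_m` with `P_m(u + u⁻¹ - 2) = u ^ m + u⁻ᵐ - 2`: a rescaled Chebyshev polynomial
of the first kind, expanded at the point of its graph corresponding to `u = 1`. -/
def shiftedChebyshev (R : Type*) [CommRing R] (m : ℕ) : R[X] :=
  (Polynomial.Chebyshev.C R m).comp (Polynomial.X + 2) - 2

theorem shiftedChebyshev_zero : shiftedChebyshev R 0 = 0 := by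
  simp [shiftedChebyshev]

theorem shiftedChebyshev_one : shiftedChebyshev R 1 = Polynomial.X := by
  simp [shiftedChebyshev]

theorem shiftedChebyshev_add_two (n : ℕ) :
    shiftedChebyshev R (n + 2) = (Polynomial.X + 2) * shiftedChebyshev R (n + 1)
      - shiftedChebyshev R n + 2 * Polynomial.X := by
  simp only [shiftedChebyshev, Nat.cast_add, Nat.cast_one, Nat.cast_ofNat,
    Polynomial.Chebyshev.C_add_two, Polynomial.sub_comp, Polynomial.mul_comp, Polynomial.X_comp]
  ring

theorem aeval_cuspParam_shiftedChebyshev (m : ℕ) :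
    aeval (cuspParam : R[T;T⁻¹]) (shiftedChebyshev R m) =
      T m + T (-m) - 2 := by
  induction m using Nat.twoStepInduction with
  | zero => norm_num [shiftedChebyshev_zero]
  | one => simp [shiftedChebyshev_one, cuspParam]
  | more n ih₀ ih₁ =>
    rw [shiftedChebyshev_add_two]
    simp only [map_add, map_sub, map_mul, map_ofNat, Polynomial.aeval_X, ih₀, ih₁]
    push_cast
    rw [T_add_two, T_neg_add_two, cuspParam]
    ring

-- Differentiate `P_m(u + u⁻¹ - 2) = u ^ m + u⁻ᵐ - 2` by `u d/du`.
theorem aeval_cuspParam_derivative_shiftedChebyshev (m : ℕ) :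
    (T 1 - T (-1)) * aeval (cuspParam : R[T;T⁻¹]) (derivative (shiftedChebyshev R m)) =
      (m : R[T;T⁻¹]) * (T m - T (-m)) := by
  induction m using Nat.twoStepInduction with
  | zero => simp [shiftedChebyshev_zero]
  | one => simp [shiftedChebyshev_one]
  | more n ih₀ ih₁ =>
    have hderiv : derivative (shiftedChebyshev R (n + 2)) =
        shiftedChebyshev R (n + 1) + 2
          + (Polynomial.X + 2) * derivative (shiftedChebyshev R (n + 1))
          - derivative (shiftedChebyshev R n) := by
      rw [shiftedChebyshev_add_two]
      simp only [Polynomial.derivative_add, Polynomial.derivative_sub, Polynomial.derivative_mul,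
        Polynomial.derivative_X, Polynomial.derivative_ofNat]
      ring
    rw [hderiv]
    simp only [map_add, map_sub, map_mul, map_ofNat, Polynomial.aeval_X,
      aeval_cuspParam_shiftedChebyshev]
    push_cast at ih₁ ⊢
    have hw : (cuspParam : R[T;T⁻¹]) + 2 = T 1 + T (-1) := by rw [cuspParam, sub_add_cancel]
    have hn : (T n : R[T;T⁻¹]) = T (-1) * T (n + 1) := by
      rw [← LaurentPolynomial.T_add]
      ring_nf
    have hn' : (T (-n) : R[T;T⁻¹]) = T 1 * T (-(n + 1)) := by
      rw [← LaurentPolynomial.T_add]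
      ring_nf
    rw [hw, T_add_two, T_neg_add_two]
    linear_combination (T 1 + T (-1)) * ih₁ - ih₀ + 2 * hn - 2 * hn'

theorem exists_shiftedChebyshev_eq (m : ℕ) :
    ∃ r : ℚ[X], shiftedChebyshev ℚ m = Polynomial.X * (Polynomial.C ((m : ℚ) ^ 2) +
      Polynomial.C ((m : ℚ) ^ 2 * ((m : ℚ) ^ 2 - 1) / 12) * Polynomial.X +
        Polynomial.X ^ 2 * r) := by
  induction m using Nat.twoStepInduction with
  | zero => exact ⟨0, by simp [shiftedChebyshev_zero]⟩
  | one => exact ⟨0, by simp [shiftedChebyshev_one]⟩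
  | more n ih₀ ih₁ =>
    obtain ⟨r₀, h₀⟩ := ih₀
    obtain ⟨r₁, h₁⟩ := ih₁
    have hlin : (Polynomial.C (((n + 2 : ℕ) : ℚ) ^ 2) : ℚ[X]) =
        2 * Polynomial.C (((n + 1 : ℕ) : ℚ) ^ 2) - Polynomial.C ((n : ℚ) ^ 2) + 2 := by
      simp only [← map_ofNat Polynomial.C 2, ← map_mul, ← map_sub, ← map_add]
      congr 1
      push_cast
      ring
    have hquad : (Polynomial.C (((n + 2 : ℕ) : ℚ) ^ 2 * (((n + 2 : ℕ) : ℚ) ^ 2 - 1) / 12) : ℚ[X]) =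
        2 * Polynomial.C (((n + 1 : ℕ) : ℚ) ^ 2 * (((n + 1 : ℕ) : ℚ) ^ 2 - 1) / 12)
          - Polynomial.C ((n : ℚ) ^ 2 * ((n : ℚ) ^ 2 - 1) / 12)
          + Polynomial.C (((n + 1 : ℕ) : ℚ) ^ 2) := by
      simp only [← map_ofNat Polynomial.C 2, ← map_mul, ← map_sub, ← map_add]
      congr 1
      push_cast
      ring
    refine ⟨(Polynomial.X + 2) * r₁ - r₀ +
      Polynomial.C (((n + 1 : ℕ) : ℚ) ^ 2 * (((n + 1 : ℕ) : ℚ) ^ 2 - 1) / 12), ?_⟩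
    rw [shiftedChebyshev_add_two, h₀, h₁, hlin, hquad]
    ring

end ShiftedChebyshev

section PoleCancellation

-- The principal parts cancel because `(d x²)² = x² + 4 x³` when `x = w⁻¹` and `d² = w² + 4 w`.
theorem exists_weierstrass_defect_eq_map_mul {A₀ A : Type*} [CommRing A₀] [CommRing A]
    (f : A₀ →+* A) {w : A₀} {x d : A} (hx : x * f w = 1) (hd : d ^ 2 = f w ^ 2 + 4 * f w)
    (s e r t : A₀) {X Z : A} (hX : X = x + f (w * (s + e * w + w ^ 2 * r)))
    (hZ : Z = d * f (s + 2 * e * w + w ^ 2 * t) - d * x ^ 2) :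
    ∃ g, Z ^ 2 - X ^ 2 - 4 * X ^ 3 + 20 * f s * X + 4 * f (s + 7 * e) = f (w * g) := by
  set ρ := s + e * w + w ^ 2 * r with hρ
  set S := s + 2 * e * w + w ^ 2 * t with hS
  refine ⟨(w + 4) * S ^ 2 - (w + 12) * ρ ^ 2 - 4 * w ^ 2 * ρ ^ 3 + 20 * s * ρ
    - 8 * t - 12 * r - 6 * e - 2 * w * (t + r), ?_⟩
  have hfρ : f ρ = f s + f e * f w + f w ^ 2 * f r := by simp only [hρ, map_add, map_mul, map_pow]
  have hfS : f S = f s + 2 * f e * f w + f w ^ 2 * f t := by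
    simp only [hS, map_add, map_mul, map_pow, map_ofNat]
  rw [hX, hZ]
  simp only [map_add, map_sub, map_mul, map_pow, map_ofNat]
  linear_combination (f S - x ^ 2) ^ 2 * hd + (-2 * f S * (x * f w + 1) - 8 * f S * x
    + x ^ 2 * (x * f w + 1) + 4 * x ^ 3 - 12 * x * f ρ - 12 * f w * f ρ ^ 2 - 2 * f ρ
    - 28 * f e - f w * (8 * f t + 12 * f r)) * hx
    - (8 * x + 2) * hfS - (12 * x + 2) * hfρ

/-- The series `∑ σ₃(N) q^N`. -/
def sigmaThreeSeries : ℚ⟦X⟧ :=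
  lambertSeries fun m => (m : ℚ) * (m : ℚ) ^ 2

/-- The series `∑ ((σ₅(N) - σ₃(N)) / 12) q^N`. -/
def sigmaDiffSeries : ℚ⟦X⟧ :=
  lambertSeries fun m => (m : ℚ) * ((m : ℚ) ^ 2 * ((m : ℚ) ^ 2 - 1) / 12)

theorem coeff_sigmaThreeSeries (N : ℕ) :
    PowerSeries.coeff N sigmaThreeSeries = ∑ m ∈ N.divisors, (m : ℚ) ^ 3 := by
  rw [sigmaThreeSeries, coeff_lambertSeries]
  exact Finset.sum_congr rfl fun m _ => by ring

theorem coeff_sigmaDiffSeries (N : ℕ) :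
    PowerSeries.coeff N sigmaDiffSeries =
      (∑ m ∈ N.divisors, (m : ℚ) ^ 5 - ∑ m ∈ N.divisors, (m : ℚ) ^ 3) / 12 := by
  rw [sigmaDiffSeries, coeff_lambertSeries, ← Finset.sum_sub_distrib, Finset.sum_div]
  exact Finset.sum_congr rfl fun m _ => by ring

theorem exists_lambertSeries_shiftedChebyshev_eq {w s e : ℚ[X]⟦X⟧}
    (hw : w = PowerSeries.C Polynomial.X)
    (hs : s = PowerSeries.map Polynomial.C sigmaThreeSeries)
    (he : e = PowerSeries.map Polynomial.C sigmaDiffSeries) :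
    ∃ r t : ℚ[X]⟦X⟧,
      lambertSeries (fun m => Polynomial.C (m : ℚ) * shiftedChebyshev ℚ m) =
        w * (s + e * w + w ^ 2 * r) ∧
      lambertSeries (fun m => Polynomial.C (m : ℚ) * derivative (shiftedChebyshev ℚ m)) =
        s + 2 * e * w + w ^ 2 * t := by
  choose r hr using exists_shiftedChebyshev_eq
  rw [sigmaThreeSeries, map_lambertSeries] at hs
  rw [sigmaDiffSeries, map_lambertSeries] at he
  refine ⟨lambertSeries fun m => Polynomial.C (m : ℚ) * r m, lambertSeries fun m =>
    Polynomial.C (m : ℚ) * (3 * r m + Polynomial.X * derivative (r m)), ?_, ?_⟩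
  · rw [mul_comm e w, hw, hs, he, ← map_pow]
    simp only [← lambertSeries_const_mul, ← lambertSeries_add]
    congr! 2 with m
    rw [hr, map_mul, map_mul]
    ring
  · rw [mul_right_comm, hw, hs, he, ← map_pow, ← map_ofNat PowerSeries.C 2, ← map_mul]
    simp only [← lambertSeries_const_mul, ← lambertSeries_add]
    congr! 2 with m
    rw [hr]
    simp only [map_mul, Polynomial.derivative_add, Polynomial.derivative_mul,
      Polynomial.derivative_X, Polynomial.derivative_C, Polynomial.derivative_X_sq, map_ofNat]
    ring

end PoleCancellation

section TateBase

theorem toLaurentSeries_one_sub_T_ne_zero {R : Type*} [CommRing R] [Nontrivial R] :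
    toLaurentSeries (1 - T 1 : R[T;T⁻¹]) ≠ 0 := by
  intro h
  have hcoeff : (toLaurentSeries (1 - T 1 : R[T;T⁻¹])).coeff 0 = 1 := by
    rw [map_sub, map_one, toLaurentSeries_T]
    simp
  simp [h] at hcoeff

/-- The embedding `B → ℚ((u))`, expanding `(1 - u)⁻¹` as a geometric series. -/
def tateBaseToLaurentSeries : TateBase →+* ℚ⸨X⸩ :=
  IsLocalization.lift (M := Submonoid.powers (1 - T 1 : ℚ[T;T⁻¹])) (g := toLaurentSeries) <| by
    rintro ⟨_, n, rfl⟩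
    simpa using (toLaurentSeries_one_sub_T_ne_zero (R := ℚ)).isUnit.pow n

theorem tateBaseToLaurentSeries_algebraMap (p : ℚ[T;T⁻¹]) :
    tateBaseToLaurentSeries (algebraMap _ TateBase p) = toLaurentSeries p :=
  IsLocalization.lift_eq _ p

theorem tateBaseToLaurentSeries_mk (p : ℚ[T;T⁻¹])
    (y : Submonoid.powers (1 - T 1 : ℚ[T;T⁻¹])) :
    tateBaseToLaurentSeries (Localization.mk p y) = toLaurentSeries p / toLaurentSeries y := by
  have hy : toLaurentSeries (y : ℚ[T;T⁻¹]) ≠ 0 := by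
    obtain ⟨_, n, rfl⟩ := y
    rw [map_pow]
    exact pow_ne_zero n toLaurentSeries_one_sub_T_ne_zero
  rw [Localization.mk_eq_mk', tateBaseToLaurentSeries, IsLocalization.lift_mk'_spec,
    mul_div_cancel₀ _ hy]

theorem tateBaseToLaurentSeries_injective : Function.Injective tateBaseToLaurentSeries := by
  refine (IsLocalization.lift_injective_iff _).2 fun p q => ⟨fun h => ?_, fun h => ?_⟩
  · rw [← tateBaseToLaurentSeries_algebraMap, h, tateBaseToLaurentSeries_algebraMap]
  · rw [toLaurentSeries_injective h]

end TateBase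

section MkNatCast

variable {R : Type*} [CommRing R]

theorem mk_natCast_mul_one_sub_sq :
    PowerSeries.mk (fun n => (n : R)) * (1 - PowerSeries.X) ^ 2 = PowerSeries.X := by
  have htel : PowerSeries.mk (fun n => (n : R)) * (1 - PowerSeries.X) =
      PowerSeries.mk 1 * PowerSeries.X := by
    ext n
    cases n <;> simp [mul_sub, PowerSeries.coeff_succ_mul_X]
  linear_combination (1 - PowerSeries.X) * htel +
    PowerSeries.X * PowerSeries.mk_one_mul_one_sub_eq_one R

theorem mk_natCast_sq_mul_one_sub_cube :
    PowerSeries.mk (fun n => (n : R) ^ 2) * (1 - PowerSeries.X) ^ 3 =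
      PowerSeries.X + PowerSeries.X ^ 2 := by
  have htel : PowerSeries.mk (fun n => (n : R) ^ 2) * (1 - PowerSeries.X) =
      2 * PowerSeries.mk (fun n => (n : R)) - PowerSeries.mk 1 * PowerSeries.X := by
    ext n
    cases n
    · simp [mul_sub]
    · simp only [mul_sub, mul_one, two_mul, map_sub, map_add, PowerSeries.coeff_succ_mul_X,
        PowerSeries.coeff_mk, Nat.cast_succ, Pi.one_apply]
      ring
  linear_combination (1 - PowerSeries.X) ^ 2 * htel + 2 * mk_natCast_mul_one_sub_sq (R := R) -
    PowerSeries.X * (1 - PowerSeries.X) * PowerSeries.mk_one_mul_one_sub_eq_one R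

end MkNatCast

section TateSeries

/-- The series `Z = 2 Y + X = u dX/du`, in terms of which `Y² + X Y` is `(Z² - X²) / 4`. -/
def tateZ : PowerSeries TateBase :=
  2 * tateY + tateX

local notation "𝕦" => (HahnSeries.single (1 : ℤ) (1 : ℚ) : ℚ⸨X⸩)

theorem one_sub_single_ne_zero : 1 - 𝕦 ≠ 0 := by
  simpa [toLaurentSeries_T] using toLaurentSeries_one_sub_T_ne_zero (R := ℚ)

theorem map_tateX_eq :
    PowerSeries.map tateBaseToLaurentSeries tateX =
      PowerSeries.C (𝕦 / (1 - 𝕦) ^ 2) + PowerSeries.map toLaurentSeries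
        (lambertSeries fun m => LaurentPolynomial.C (m : ℚ) * (T (m : ℤ) + T (-(m : ℤ)) - 2)) := by
  rw [tateX, mk_ite_eq_C_add_map_lambertSeries, map_add, PowerSeries.map_C,
    tateBaseToLaurentSeries_mk, map_lambertSeries, map_lambertSeries, map_lambertSeries]
  simp only [tateBaseToLaurentSeries_algebraMap, map_pow, map_sub, map_one, toLaurentSeries_T]

theorem map_tateY_eq :
    PowerSeries.map tateBaseToLaurentSeries tateY =
      PowerSeries.C (𝕦 ^ 2 / (1 - 𝕦) ^ 3) + PowerSeries.map toLaurentSeries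
        (lambertSeries fun m => LaurentPolynomial.C ((m : ℚ) * ((m : ℚ) - 1) / 2) * T (m : ℤ)
          - LaurentPolynomial.C ((m : ℚ) * ((m : ℚ) + 1) / 2) * T (-(m : ℤ))
          + LaurentPolynomial.C (m : ℚ)) := by
  rw [tateY, mk_ite_eq_C_add_map_lambertSeries, map_add, PowerSeries.map_C,
    tateBaseToLaurentSeries_mk, map_lambertSeries, map_lambertSeries, map_lambertSeries]
  simp only [tateBaseToLaurentSeries_algebraMap, map_pow, map_sub, map_one, toLaurentSeries_T]
  simp

theorem map_tateZ_eq :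
    PowerSeries.map tateBaseToLaurentSeries tateZ =
      PowerSeries.C ((𝕦 + 𝕦 ^ 2) / (1 - 𝕦) ^ 3) + PowerSeries.map toLaurentSeries
        (lambertSeries fun m => LaurentPolynomial.C ((m : ℚ) ^ 2) *
          (T (m : ℤ) - T (-(m : ℤ)))) := by
  have hconst : (𝕦 + 𝕦 ^ 2) / (1 - 𝕦) ^ 3 = 2 * (𝕦 ^ 2 / (1 - 𝕦) ^ 3) + 𝕦 / (1 - 𝕦) ^ 2 := by
    have hne := one_sub_single_ne_zero
    field_simp
    ring
  have hterm (m : ℕ) : (LaurentPolynomial.C ((m : ℚ) ^ 2) * (T m - T (-m)) : ℚ[T;T⁻¹]) =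
      2 * (LaurentPolynomial.C ((m : ℚ) * ((m : ℚ) - 1) / 2) * T m
        - LaurentPolynomial.C ((m : ℚ) * ((m : ℚ) + 1) / 2) * T (-m) + LaurentPolynomial.C (m : ℚ))
      + LaurentPolynomial.C (m : ℚ) * (T m + T (-m) - 2) := by
    have hhalf (a : ℚ) : (2 : ℚ[T;T⁻¹]) * LaurentPolynomial.C (a / 2) = LaurentPolynomial.C a := by
      rw [← map_ofNat LaurentPolynomial.C 2, ← map_mul, mul_div_cancel₀ a two_ne_zero]
    have hminus := hhalf ((m : ℚ) * ((m : ℚ) - 1))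
    have hplus := hhalf ((m : ℚ) * ((m : ℚ) + 1))
    simp only [map_mul, map_sub, map_add, map_one, map_pow] at hminus hplus ⊢
    linear_combination -T m * hminus + T (-m) * hplus
  simp only [hconst, hterm]
  rw [lambertSeries_add, lambertSeries_const_mul, tateZ, map_add, map_mul, map_tateX_eq,
    map_tateY_eq]
  simp only [map_add, map_mul, map_ofNat]
  ring

theorem single_div_one_sub_sq_eq_ofPowerSeries :
    𝕦 / (1 - 𝕦) ^ 2 = HahnSeries.ofPowerSeries ℤ ℚ (PowerSeries.mk fun n => (n : ℚ)) := by
  rw [div_eq_iff (pow_ne_zero 2 one_sub_single_ne_zero)]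
  simpa using congrArg (HahnSeries.ofPowerSeries ℤ ℚ) (mk_natCast_mul_one_sub_sq (R := ℚ)).symm

theorem single_add_sq_div_one_sub_cube_eq_ofPowerSeries :
    (𝕦 + 𝕦 ^ 2) / (1 - 𝕦) ^ 3 =
      HahnSeries.ofPowerSeries ℤ ℚ (PowerSeries.mk fun n => (n : ℚ) ^ 2) := by
  rw [div_eq_iff (pow_ne_zero 3 one_sub_single_ne_zero)]
  simpa using congrArg (HahnSeries.ofPowerSeries ℤ ℚ) (mk_natCast_sq_mul_one_sub_cube (R := ℚ)).symm

theorem coeff_C_mul_T_add_T_neg_sub_two {R : Type*} [CommRing R] (a : R) (m : ℕ) {k : ℤ}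
    (hk : k ≠ 0) :
    (LaurentPolynomial.C a * (T m + T (-m) - 2) : R[T;T⁻¹]).coeff k =
      if k.natAbs = m then a else 0 := by
  rw [← LaurentPolynomial.smul_eq_C_mul, ← map_ofNat LaurentPolynomial.C 2]
  have hcases : k.natAbs = m ↔ (m : ℤ) = k ∨ -(m : ℤ) = k := by omega
  have hexcl : ¬((m : ℤ) = k ∧ -(m : ℤ) = k) := by omega
  by_cases hpos : (m : ℤ) = k <;> by_cases hneg : -(m : ℤ) = k <;> simp_all

theorem coeff_C_sq_mul_T_sub_T_neg {R : Type*} [CommRing R] (m : ℕ) (k : ℤ) :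
    (LaurentPolynomial.C ((m : R) ^ 2) * (T m - T (-m)) : R[T;T⁻¹]).coeff k =
      k * (LaurentPolynomial.C (m : R) * (T m + T (-m) - 2) : R[T;T⁻¹]).coeff k := by
  rcases eq_or_ne k 0 with rfl | hk
  · rw [← LaurentPolynomial.smul_eq_C_mul]
    simp
  · rw [coeff_C_mul_T_add_T_neg_sub_two _ _ hk, ← LaurentPolynomial.smul_eq_C_mul]
    obtain ⟨n, rfl | rfl⟩ := k.eq_nat_or_neg <;> have hn : n ≠ 0 := by omega
    · rcases eq_or_ne n m with rfl | hnm
      · simp [hn, sq]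
      · simp [hn, hnm, hnm.symm]
    · rcases eq_or_ne n m with rfl | hnm
      · simp [hn, sq]
      · simp [hn, hnm, hnm.symm]

theorem coeff_coeff_map_tateX (N : ℕ) {k : ℤ} (hk : k ≠ 0) :
    (PowerSeries.coeff N (PowerSeries.map tateBaseToLaurentSeries tateX)).coeff k =
      if 0 ≤ k + N ∧ k ∣ N then (|k| : ℚ) else 0 := by
  rw [map_tateX_eq, single_div_one_sub_sq_eq_ofPowerSeries, map_add, PowerSeries.coeff_C,
    PowerSeries.coeff_map, coeff_lambertSeries]
  rcases eq_or_ne N 0 with rfl | hN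
  · rcases lt_or_ge k 0 with hneg | hnonneg
    · simp [PowerSeries.coeff_coe, hneg]
    · simp [PowerSeries.coeff_coe, hnonneg, Nat.cast_natAbs]
  · have hdvd : (0 ≤ k + N ∧ k ∣ N) ↔ k.natAbs ∈ N.divisors := by
      rw [Nat.mem_divisors, ← Int.natCast_dvd_natCast, Int.natAbs_dvd]
      refine ⟨fun h => ⟨h.2, hN⟩, fun h => ⟨?_, h.1⟩⟩
      have hle := Int.le_of_dvd (by omega) (neg_dvd.2 h.1)
      omega
    simp only [hN, if_false, zero_add, coeff_toLaurentSeries, hdvd]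
    simp only [AddMonoidAlgebra.coeff_sum, Finsupp.finsetSum_apply,
      coeff_C_mul_T_add_T_neg_sub_two _ _ hk, Finset.sum_ite_eq, Nat.cast_natAbs, Int.cast_abs]

theorem coeff_coeff_map_tateZ (N : ℕ) (k : ℤ) :
    (PowerSeries.coeff N (PowerSeries.map tateBaseToLaurentSeries tateZ)).coeff k =
      k * (PowerSeries.coeff N (PowerSeries.map tateBaseToLaurentSeries tateX)).coeff k := by
  rw [map_tateX_eq, map_tateZ_eq, single_div_one_sub_sq_eq_ofPowerSeries,
    single_add_sq_div_one_sub_cube_eq_ofPowerSeries]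
  simp only [map_add, PowerSeries.coeff_map, coeff_lambertSeries, PowerSeries.coeff_C]
  rw [HahnSeries.coeff_add, HahnSeries.coeff_add, mul_add]
  congr 1
  · split_ifs
    · rcases lt_or_ge k 0 with hneg | hnonneg
      · simp [PowerSeries.coeff_coe, hneg]
      · have habs : |(k : ℚ)| = k := abs_of_nonneg (Int.cast_nonneg hnonneg)
        simp [PowerSeries.coeff_coe, hnonneg.not_gt, habs, sq, Nat.cast_natAbs]
    · simp
  · rw [coeff_toLaurentSeries, coeff_toLaurentSeries]
    simp only [AddMonoidAlgebra.coeff_sum, Finsupp.finsetSum_apply, coeff_C_sq_mul_T_sub_T_neg,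
      Finset.mul_sum]

theorem map_tateX_mem_reflectionInvariants :
    PowerSeries.map tateBaseToLaurentSeries tateX ∈ reflectionInvariants ℚ := by
  refine mem_reflectionInvariants_iff.2 ⟨fun N k hk => ?_, fun i j => ?_⟩
  · rw [coeff_coeff_map_tateX N (by omega), if_neg (by omega)]
  · rcases eq_or_ne i j with rfl | hij
    · rfl
    · have hdvd : (i - j : ℤ) ∣ j ↔ (j - i : ℤ) ∣ i := by
        rw [← neg_sub, neg_dvd]
        exact dvd_iff_dvd_of_dvd_sub dvd_rfl
      rw [coeff_coeff_map_tateX _ (by omega), coeff_coeff_map_tateX _ (by omega)]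
      simp [hdvd, abs_sub_comm]

theorem map_tateZ_sq_mem_reflectionInvariants :
    PowerSeries.map tateBaseToLaurentSeries tateZ ^ 2 ∈ reflectionInvariants ℚ := by
  obtain ⟨hneg, hsymm⟩ := mem_reflectionInvariants_iff.1 map_tateX_mem_reflectionInvariants
  refine sq_mem_reflectionInvariants (fun N k hk => ?_) fun i j => ?_
  · rw [coeff_coeff_map_tateZ, hneg N k hk, mul_zero]
  · rw [coeff_coeff_map_tateZ, coeff_coeff_map_tateZ, hsymm]
    push_cast
    ring

theorem map_tateA4 :
    PowerSeries.map tateBaseToLaurentSeries tateA4 =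
      PowerSeries.map HahnSeries.C (-(5 * sigmaThreeSeries)) := by
  ext1 N
  rw [PowerSeries.coeff_map, PowerSeries.coeff_map, tateA4, PowerSeries.coeff_mk, map_neg,
    ← map_ofNat PowerSeries.C 5, PowerSeries.coeff_C_mul, coeff_sigmaThreeSeries, ← neg_mul]
  split_ifs with hN
  · simp [hN]
  · rw [tateBaseToLaurentSeries_algebraMap, toLaurentSeries_C]

theorem map_tateA6 :
    PowerSeries.map tateBaseToLaurentSeries tateA6 =
      PowerSeries.map HahnSeries.C (-(sigmaThreeSeries + 7 * sigmaDiffSeries)) := by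
  ext1 N
  rw [PowerSeries.coeff_map, PowerSeries.coeff_map, tateA6, PowerSeries.coeff_mk, map_neg, map_add,
    ← map_ofNat PowerSeries.C 7, PowerSeries.coeff_C_mul, coeff_sigmaThreeSeries,
    coeff_sigmaDiffSeries]
  split_ifs with hN
  · simp [hN]
  · rw [tateBaseToLaurentSeries_algebraMap, toLaurentSeries_C]
    ring_nf

theorem map_tateX_eq_map_evalCuspParam :
    PowerSeries.map tateBaseToLaurentSeries tateX =
      PowerSeries.C (𝕦 / (1 - 𝕦) ^ 2) + PowerSeries.map evalCuspParam
        (lambertSeries fun m => Polynomial.C (m : ℚ) * shiftedChebyshev ℚ m) := by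
  rw [map_tateX_eq, map_lambertSeries, map_lambertSeries]
  congr! 3 with m
  rw [map_mul evalCuspParam, evalCuspParam_C, evalCuspParam_apply,
    aeval_cuspParam_shiftedChebyshev, map_mul, toLaurentSeries_C]

theorem toLaurentSeries_T_one_sub_T_neg_one :
    toLaurentSeries (T 1 - T (-1)) = 𝕦 - 𝕦⁻¹ := by
  rw [map_sub, toLaurentSeries_T, toLaurentSeries_T, HahnSeries.inv_single, inv_one]

theorem single_div_one_sub_sq_mul_cuspParam :
    𝕦 / (1 - 𝕦) ^ 2 * toLaurentSeries cuspParam = 1 := by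
  have hw : toLaurentSeries cuspParam = 𝕦 + 𝕦⁻¹ - 2 := by
    simp only [cuspParam, map_add, map_sub, map_ofNat, toLaurentSeries_T, HahnSeries.inv_single,
      inv_one]
  rw [hw]
  have hne := one_sub_single_ne_zero
  field_simp
  ring

theorem map_tateZ_eq_map_evalCuspParam :
    PowerSeries.map tateBaseToLaurentSeries tateZ =
      PowerSeries.C (toLaurentSeries (T 1 - T (-1))) * PowerSeries.map evalCuspParam
        (lambertSeries fun m => Polynomial.C (m : ℚ) * derivative (shiftedChebyshev ℚ m))
      - PowerSeries.C (toLaurentSeries (T 1 - T (-1))) * PowerSeries.C (𝕦 / (1 - 𝕦) ^ 2) ^ 2 := by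
  have hconst : (𝕦 + 𝕦 ^ 2) / (1 - 𝕦) ^ 3 =
      -(toLaurentSeries (T 1 - T (-1)) * (𝕦 / (1 - 𝕦) ^ 2) ^ 2) := by
    rw [toLaurentSeries_T_one_sub_T_neg_one]
    have hne := one_sub_single_ne_zero
    field_simp
    ring
  have hterm (m : ℕ) : toLaurentSeries (LaurentPolynomial.C ((m : ℚ) ^ 2) * (T m - T (-m))) =
      toLaurentSeries (T 1 - T (-1)) *
        evalCuspParam (Polynomial.C (m : ℚ) * derivative (shiftedChebyshev ℚ m)) := by
    rw [map_mul evalCuspParam, evalCuspParam_C, evalCuspParam_apply, mul_left_comm, ← map_mul,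
      aeval_cuspParam_derivative_shiftedChebyshev, ← toLaurentSeries_C, ← map_mul,
      map_pow LaurentPolynomial.C, map_natCast LaurentPolynomial.C, sq, mul_assoc]
  rw [map_tateZ_eq, map_lambertSeries, map_lambertSeries]
  simp only [hterm]
  rw [lambertSeries_const_mul, hconst, map_neg, map_mul, map_pow, neg_add_eq_sub]

theorem exists_tate_defect_eq :
    ∃ G : ℚ[X]⟦X⟧, PowerSeries.map tateBaseToLaurentSeries
        (tateZ ^ 2 - tateX ^ 2 - 4 * (tateX ^ 3 + tateA4 * tateX + tateA6)) =
      PowerSeries.map evalCuspParam (PowerSeries.C Polynomial.X * G) := by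
  obtain ⟨r, t, hr, ht⟩ := exists_lambertSeries_shiftedChebyshev_eq rfl rfl rfl
  have hx : PowerSeries.C (𝕦 / (1 - 𝕦) ^ 2) *
      PowerSeries.map evalCuspParam (PowerSeries.C Polynomial.X) = 1 := by
    rw [PowerSeries.map_C, evalCuspParam_X, ← map_mul, single_div_one_sub_sq_mul_cuspParam, map_one]
  have hd : PowerSeries.C (toLaurentSeries (T 1 - T (-1))) ^ 2 =
      PowerSeries.map evalCuspParam (PowerSeries.C Polynomial.X) ^ 2 +
        4 * PowerSeries.map evalCuspParam (PowerSeries.C (Polynomial.X : ℚ[X])) := by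
    rw [PowerSeries.map_C, evalCuspParam_X, ← map_pow, ← map_pow, T_one_sub_T_neg_one_sq]
    simp only [map_add, map_mul, map_pow, map_ofNat]
  obtain ⟨G, hG⟩ := exists_weierstrass_defect_eq_map_mul (PowerSeries.map evalCuspParam) hx hd
    _ _ r t (hr ▸ map_tateX_eq_map_evalCuspParam) (ht ▸ map_tateZ_eq_map_evalCuspParam)
  refine ⟨G, hG ▸ ?_⟩
  simp only [map_sub, map_add, map_mul, map_pow, map_ofNat, map_neg, map_tateA4, map_tateA6,
    map_evalCuspParam_map_C]
  ring

theorem tate_defect_mem_reflectionInvariants :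
    PowerSeries.map tateBaseToLaurentSeries
      (tateZ ^ 2 - tateX ^ 2 - 4 * (tateX ^ 3 + tateA4 * tateX + tateA6)) ∈
      reflectionInvariants ℚ := by
  have hX := map_tateX_mem_reflectionInvariants
  have hZ := map_tateZ_sq_mem_reflectionInvariants
  have hA4 := map_tateA4 ▸ map_C_mem_reflectionInvariants (-(5 * sigmaThreeSeries))
  have hA6 := map_tateA6 ▸ map_C_mem_reflectionInvariants
    (-(sigmaThreeSeries + 7 * sigmaDiffSeries))
  simp only [map_sub, map_add, map_mul, map_pow, map_ofNat]
  exact sub_mem (sub_mem hZ (pow_mem hX 2)) (mul_mem (ofNat_mem _ 4)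
    (add_mem (add_mem (pow_mem hX 3) (mul_mem hA4 hX)) hA6))

end TateSeries

/-- **The Tate series satisfy the Weierstrass equation of the Tate curve:**
`Y² + X·Y = X³ + a₄·X + a₆` in `B[[q]]`. -/
theorem tate_weierstrass_equation :
    tateY ^ 2 + tateX * tateY = tateX ^ 3 + tateA4 * tateX + tateA6 := by
  obtain ⟨G, hG⟩ := exists_tate_defect_eq
  have hvanish := map_evalCuspParam_C_X_mul_eq_zero (hG ▸ tate_defect_mem_reflectionInvariants)
  have hdefect : tateZ ^ 2 - tateX ^ 2 - 4 * (tateX ^ 3 + tateA4 * tateX + tateA6) = 0 :=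
    PowerSeries.map_injective _ tateBaseToLaurentSeries_injective (by rw [hG, hvanish, map_zero])
  have hfour : (4 : PowerSeries TateBase) *
      (tateY ^ 2 + tateX * tateY - (tateX ^ 3 + tateA4 * tateX + tateA6)) = 0 := by
    rw [tateZ] at hdefect
    linear_combination hdefect
  have hunit : IsUnit (4 : PowerSeries TateBase) := by
    rw [← map_ofNat (algebraMap ℚ (PowerSeries TateBase)) 4]
    exact (IsUnit.mk0 (4 : ℚ) four_ne_zero).map _
  exact sub_eq_zero.1 (hunit.mul_right_eq_zero.1 hfour)

end
end

section
/- Let R be a complete discrete valuation ring with uniformizer π. Let R[[u]][u⁻¹] denote the localization of the power series ring R[[u]] at the multiplicative submonoid of powers of u, and let R⟨u⟩ be the π-adic completion of R[[u]][u⁻¹] (equivalently, the inverse limit over n of (R/π^n)[[u]][u⁻¹]). Then R⟨u⟩ is a discrete valuation ring whose maximal ideal is generated by the image of π (i.e. the image of π is a uniformizer of R⟨u⟩). -/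
/-- The localization `R[[u]][u⁻¹]` of the power series ring `R[[u]]` at the powers
of `u`. -/
abbrev PowerSeriesLoc (R : Type*) [CommRing R] : Type _ :=
  Localization (Submonoid.powers (PowerSeries.X : PowerSeries R))

/-- The ring `R⟨u⟩`: the `π`-adic completion of `R[[u]][u⁻¹]`. -/
abbrev PowerSeriesLocCompletion (R : Type*) [CommRing R] (π : R) : Type _ :=
  AdicCompletion
    (Ideal.span {algebraMap (PowerSeries R) (PowerSeriesLoc R) (PowerSeries.C π)})
    (PowerSeriesLoc R)

/-!
Modulo `π`, the ring `R[[u]][u⁻¹]` becomes `(R/π)((u))`, a field, so `π` generates a maximal ideal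
of it. The `π`-adic completion is therefore a local ring whose maximal ideal is generated by `π`;
as it is `π`-adically separated, every nonzero element is a unit times a power of `π`. Such a ring
is a discrete valuation ring as soon as `π` is not nilpotent, and comparing coefficients of powers
of `u` shows that `π ^ n` is nonzero modulo `π ^ (n + 1)`, since this holds in `R`.
-/

section PrincipalMaximalIdeal

variable {B : Type*} [CommRing B] {q : B}

theorem finiteMultiplicity_of_isHausdorff_span_singleton [IsHausdorff (Ideal.span {q}) B] {x : B}
    (hx : x ≠ 0) : FiniteMultiplicity q x := by
  by_contra hfin
  have hdvd : ∀ n, q ^ n ∣ x := FiniteMultiplicity.not_iff_forall.1 hfin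
  refine hx (IsHausdorff.haus ‹IsHausdorff (Ideal.span {q}) B› x fun n => ?_)
  rw [SModEq.zero, smul_eq_mul, Ideal.mul_top, Ideal.span_singleton_pow, Ideal.mem_span_singleton]
  exact hdvd n

variable [IsLocalRing B] [IsHausdorff (Ideal.span {q}) B]

theorem exists_associated_pow_of_maximalIdeal_eq_span
    (hq : IsLocalRing.maximalIdeal B = Ideal.span {q}) {x : B} (hx : x ≠ 0) :
    ∃ n : ℕ, Associated (q ^ n) x := by
  obtain ⟨y, hxy, hqy⟩ :=
    (finiteMultiplicity_of_isHausdorff_span_singleton (q := q) hx).exists_eq_pow_mul_and_not_dvd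
  have hy : IsUnit y := by
    rwa [← IsLocalRing.notMem_maximalIdeal, hq, Ideal.mem_span_singleton]
  exact ⟨multiplicity q x, hy.unit, hxy.symm⟩

theorem isDomain_of_maximalIdeal_eq_span (hq : IsLocalRing.maximalIdeal B = Ideal.span {q})
    (hnil : ¬ IsNilpotent q) : IsDomain B := by
  have : NoZeroDivisors B := by
    refine ⟨fun {a b} hab => ?_⟩
    by_contra! hne
    obtain ⟨m, hm⟩ := exists_associated_pow_of_maximalIdeal_eq_span hq hne.1
    obtain ⟨n, hn⟩ := exists_associated_pow_of_maximalIdeal_eq_span hq hne.2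
    have hmn : Associated (q ^ (m + n)) 0 := by
      rw [pow_add, ← hab]
      exact hm.mul_mul hn
    exact hnil ⟨m + n, (associated_zero_iff_eq_zero _).1 hmn⟩
  exact NoZeroDivisors.to_isDomain B

theorem isDiscreteValuationRing_of_maximalIdeal_eq_span [IsDomain B]
    (hq : IsLocalRing.maximalIdeal B = Ideal.span {q}) (hq0 : q ≠ 0) :
    IsDiscreteValuationRing B :=
  IsDiscreteValuationRing.ofHasUnitMulPowIrreducibleFactorization
    ⟨q, IsDiscreteValuationRing.irreducible_of_span_eq_maximalIdeal q hq0 hq,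
      exists_associated_pow_of_maximalIdeal_eq_span hq⟩

end PrincipalMaximalIdeal

section AdicCompletion

variable {A : Type*} [CommRing A] {p : A}

theorem not_isNilpotent_algebraMap_adicCompletion (hp : ∀ n : ℕ, ¬ p ^ (n + 1) ∣ p ^ n) :
    ¬ IsNilpotent (algebraMap A (AdicCompletion (Ideal.span {p}) A) p) := by
  rintro ⟨n, hn⟩
  have heval := congrArg (AdicCompletion.evalₐ (Ideal.span {p}) (n + 1)) hn
  rw [← map_pow, AlgHom.commutes, map_zero, Ideal.Quotient.algebraMap_eq,
    Ideal.Quotient.eq_zero_iff_mem, Ideal.span_singleton_pow, Ideal.mem_span_singleton] at heval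
  exact hp n heval

theorem exists_isDiscreteValuationRing_adicCompletion_span_singleton
    (hmax : (Ideal.span {p}).IsMaximal) (hp : ∀ n : ℕ, ¬ p ^ (n + 1) ∣ p ^ n) :
    ∃ (hdom : IsDomain (AdicCompletion (Ideal.span {p}) A))
      (hdvr : @IsDiscreteValuationRing (AdicCompletion (Ideal.span {p}) A) _ hdom),
      @IsLocalRing.maximalIdeal (AdicCompletion (Ideal.span {p}) A) _
          (@IsDiscreteValuationRing.toIsLocalRing _ _ hdom hdvr) =
        Ideal.span {algebraMap A (AdicCompletion (Ideal.span {p}) A) p} := by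
  have hfg : (Ideal.span {p}).FG := Submodule.fg_span_singleton p
  have hcomplete := AdicCompletion.isAdicComplete_self _ hfg
  have hmax' := AdicCompletion.isMaximal_map_of_le _ (Ideal.span {p}) le_rfl hfg
  rw [Ideal.map_span, Set.image_singleton] at hcomplete hmax'
  have hlocal := isLocalRing_of_isAdicComplete_maximal
    (Ideal.span {algebraMap A (AdicCompletion (Ideal.span {p}) A) p})
  have hspan := (IsLocalRing.eq_maximalIdeal hmax').symm
  have hnil := not_isNilpotent_algebraMap_adicCompletion hp
  have hdom := isDomain_of_maximalIdeal_eq_span hspan hnil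
  have hne_zero : algebraMap A (AdicCompletion (Ideal.span {p}) A) p ≠ 0 :=
    fun h => hnil (h ▸ IsNilpotent.zero)
  exact ⟨hdom, isDiscreteValuationRing_of_maximalIdeal_eq_span hspan hne_zero, hspan⟩

end AdicCompletion

section PowerSeries

open PowerSeries LaurentSeries

theorem powerSeries_C_dvd_iff {R : Type*} [Semiring R] {r : R} {φ : R⟦X⟧} :
    C r ∣ φ ↔ ∀ n, r ∣ coeff n φ := by
  constructor
  · rintro ⟨ψ, rfl⟩ n
    exact ⟨coeff n ψ, coeff_C_mul n ψ r⟩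
  · intro h
    choose c hc using h
    exact ⟨mk c, by ext n; rw [coeff_C_mul, coeff_mk, hc]⟩

variable {R : Type*} [CommRing R]

theorem ker_powerSeries_map_eq_span {T : Type*} [Semiring T] {f : R →+* T} {r : R}
    (hf : RingHom.ker f = Ideal.span {r}) :
    RingHom.ker (PowerSeries.map f) = Ideal.span {C r} := by
  ext φ
  simp only [RingHom.mem_ker, PowerSeries.ext_iff, coeff_map, map_zero, ← RingHom.mem_ker (f := f),
    hf, Ideal.mem_span_singleton, powerSeries_C_dvd_iff]

variable (S : Type*) [CommRing S] [Algebra R⟦X⟧ S] [IsLocalization.Away (X : R⟦X⟧) S]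

theorem isMaximal_span_algebraMap_C {r : R} (hr : (Ideal.span {r}).IsMaximal) :
    (Ideal.span {algebraMap R⟦X⟧ S (C r)}).IsMaximal := by
  let K := R ⧸ Ideal.span {r}
  let : Field K := Ideal.Quotient.field (Ideal.span {r})
  let reduction : R⟦X⟧ →+* K⟦X⟧ := PowerSeries.map (Ideal.Quotient.mk (Ideal.span {r}))
  have hX : (Submonoid.powers X).map reduction = Submonoid.powers X := by
    rw [Submonoid.map_powers, PowerSeries.map_X]
  have : IsLocalization ((Submonoid.powers X).map reduction) K⸨X⸩ := hX ▸ inferInstance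
  have hreduction : Function.Surjective reduction :=
    PowerSeries.map_surjective _ Ideal.Quotient.mk_surjective
  have hsurj := IsLocalization.map_surjective_of_surjective (Submonoid.powers X) S K⸨X⸩ hreduction
  have hker := IsLocalization.ker_map (S := S) K⸨X⸩ reduction (M := Submonoid.powers X) rfl
  rw [ker_powerSeries_map_eq_span Ideal.mk_ker, Ideal.map_span, Set.image_singleton] at hker
  exact hker ▸ RingHom.ker_isMaximal_of_surjective _ hsurj

theorem algebraMap_C_dvd_algebraMap_C_iff {a b : R} :
    algebraMap R⟦X⟧ S (C a) ∣ algebraMap R⟦X⟧ S (C b) ↔ a ∣ b := by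
  refine ⟨fun h => ?_, fun h => map_dvd _ (map_dvd _ h)⟩
  rw [← Ideal.mem_span_singleton, ← Set.image_singleton, ← Ideal.map_span,
    IsLocalization.algebraMap_mem_map_algebraMap_iff (Submonoid.powers X)] at h
  obtain ⟨_, ⟨k, rfl⟩, hk⟩ := h
  rw [Ideal.mem_span_singleton, powerSeries_C_dvd_iff] at hk
  simpa [coeff_X_pow_mul'] using hk k

end PowerSeries

theorem powerSeriesLocCompletion_isDVR_general (R : Type*) [CommRing R] (π : R)
    (hmax : (Ideal.span {π}).IsMaximal) (hpow : ∀ n : ℕ, ¬ π ^ (n + 1) ∣ π ^ n) :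
    ∃ (hdom : IsDomain (PowerSeriesLocCompletion R π))
      (hdvr : @IsDiscreteValuationRing (PowerSeriesLocCompletion R π) _ hdom),
      @IsLocalRing.maximalIdeal (PowerSeriesLocCompletion R π) _
          (@IsDiscreteValuationRing.toIsLocalRing _ _ hdom hdvr) =
        Ideal.span {algebraMap (PowerSeriesLoc R) (PowerSeriesLocCompletion R π)
          (algebraMap (PowerSeries R) (PowerSeriesLoc R) (PowerSeries.C π))} := by
  refine exists_isDiscreteValuationRing_adicCompletion_span_singleton
    (isMaximal_span_algebraMap_C (PowerSeriesLoc R) hmax) fun n => ?_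
  simp only [← map_pow, algebraMap_C_dvd_algebraMap_C_iff]
  exact hpow n

/-- **`R⟨u⟩` is a discrete valuation ring with uniformizer `π`:** for a complete
discrete valuation ring `R` with uniformizer `π`, the `π`-adic completion `R⟨u⟩` of
`R[[u]][u⁻¹]` is a discrete valuation ring whose maximal ideal is generated by the
image of `π`. -/
theorem powerSeriesLocCompletion_isDVR (R : Type*) [CommRing R] [IsDomain R]
    [IsDiscreteValuationRing R] [IsAdicComplete (IsLocalRing.maximalIdeal R) R]
    (π : R) (hπ : IsLocalRing.maximalIdeal R = Ideal.span {π}) :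
    ∃ (hdom : IsDomain (PowerSeriesLocCompletion R π))
      (hdvr : @IsDiscreteValuationRing (PowerSeriesLocCompletion R π) _ hdom),
      @IsLocalRing.maximalIdeal (PowerSeriesLocCompletion R π) _
          (@IsDiscreteValuationRing.toIsLocalRing _ _ hdom hdvr) =
        Ideal.span {algebraMap (PowerSeriesLoc R) (PowerSeriesLocCompletion R π)
          (algebraMap (PowerSeries R) (PowerSeriesLoc R) (PowerSeries.C π))} := by
  have hirr := (IsDiscreteValuationRing.irreducible_iff_uniformizer π).2 hπ
  exact powerSeriesLocCompletion_isDVR_general R π (hπ ▸ IsLocalRing.maximalIdeal.isMaximal R)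
    fun n => mt (pow_dvd_pow_iff hirr.ne_zero hirr.not_isUnit).1 n.not_succ_le_self
end
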